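/- Let β > 0 and let C be a non-circular component of G. Then C is A(β)-harmonic (i.e. ρ(A(β)^C) = 1 and, in case C̄∖C ≠ ∅, ρ(A(β)^{C̄∖C}) < 1) if and only if the following three conditions hold: F(μ) > 0 for every loop μ in C̄; ρ(A(β)^C) = 1; and for every component C' of G contained in C̄∖C there exists β' < β with ρ(A(β')^{C'}) = 1. -/

import Mathlib

open Filter Finset

/-- The spectral radius of a real matrix, `ρ(M) = lim_n ‖Mⁿ‖^{1/n}`
(computed with the entrywise ℓ¹-norm, and as a `limsup` so that it is always defined;
it is `0` for the matrix over the empty index type). -/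
noncomputable def specRad {n : Type*} [Fintype n] [DecidableEq n] (M : Matrix n n ℝ) : ℝ :=
  Filter.limsup (fun k : ℕ => (∑ i, ∑ j, |(M ^ k) i j|) ^ ((1 : ℝ) / (k : ℝ))) Filter.atTop

/-- The spectral radius `ρ(B^S)` of the submatrix of `B` obtained by restricting to `S × S`. -/
noncomputable def specRadOn {V : Type*} [Fintype V] (B : Matrix V V ℝ) (S : Set V) : ℝ :=
  letI : Fintype S := (Set.toFinite S).fintype
  letI : DecidableEq S := Classical.decEq _
  specRad (fun i j : S => B i.1 j.1)

variable {V E : Type*}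

/-- Consecutive edges of the list match up: `r(eᵢ) = s(eᵢ₊₁)`. -/
def ChainOK (src rng : E → V) (μ : List E) : Prop :=
  List.Chain' (fun e f => rng e = src f) μ

/-- A loop: a nonempty path `μ = e₁⋯eₙ` with `s(e₁) = r(eₙ)`. -/
def IsLoop (src rng : E → V) (μ : List E) : Prop :=
  ∃ h : μ ≠ [], ChainOK src rng μ ∧ src (μ.head h) = rng (μ.getLast h)

/-- A loop lying in the vertex set `C`. -/
def LoopIn (src rng : E → V) (C : Set V) (μ : List E) : Prop :=
  IsLoop src rng μ ∧ ∀ e ∈ μ, src e ∈ C ∧ rng e ∈ C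

/-- `v ⤳ w`: there is a (possibly length-0) path from `v` to `w`. -/
def GReaches (src rng : E → V) (v w : V) : Prop :=
  v = w ∨ ∃ μ : List E, ∃ h : μ ≠ [],
    ChainOK src rng μ ∧ src (μ.head h) = v ∧ rng (μ.getLast h) = w

/-- The closure of a set of vertices: all vertices that reach it. -/
def GClosure (src rng : E → V) (C : Set V) : Set V :=
  {v | ∃ w ∈ C, GReaches src rng v w}

/-- A component: an equivalence class of `v ∼ w` (mutual reachability) containing a loop. -/
def GIsComponent (src rng : E → V) (C : Set V) : Prop :=
  (∃ v, C = {w | GReaches src rng v w ∧ GReaches src rng w v}) ∧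
  ∃ μ : List E, LoopIn src rng C μ

/-- The property that the loop `μ` witnesses circularity of the component `C`: `μ` is a simple
loop visiting every vertex of `C`, and containing every edge of the graph joining vertices
of `C`. -/
def CircularWitness (src rng : E → V) (C : Set V) (μ : List E) : Prop :=
  LoopIn src rng C μ ∧ (μ.map src).Nodup ∧
  (∀ v ∈ C, v ∈ μ.map src) ∧
  (∀ e : E, src e ∈ C → rng e ∈ C → e ∈ μ)

/-- A circular component: a component containing, up to the choice of starting vertex,
exactly one loop. -/
def IsCircular (src rng : E → V) (C : Set V) : Prop :=
  GIsComponent src rng C ∧ ∃ μ : List E, CircularWitness src rng C μ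

/-- The matrix `A(β)` with entries `A(β)_{vw} = Σ_{e : v → w} e^{-β F(e)}`. -/
noncomputable def Amat [Fintype E] [DecidableEq V] (src rng : E → V) (F : E → ℝ) (β : ℝ) :
    Matrix V V ℝ :=
  fun v w => ∑ e ∈ Finset.univ.filter (fun e => src e = v ∧ rng e = w), Real.exp (-β * F e)

/-- `F` extended to paths: `F(e₁⋯eₙ) = F(e₁) + ⋯ + F(eₙ)`. -/
def Fpath (F : E → ℝ) (μ : List E) : ℝ := (μ.map F).sum

/-!
For a nonnegative matrix, `ρ(M) < r` means that `M u < r u` for some strictly positive vector `u`: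
a truncated Neumann series produces `u`, and iterating the inequality gives the converse. Suitably
rescaled, such vectors on the blocks of a block triangular matrix combine, so `ρ(A(β)^S) < 1` can be
tested on the communicating classes contained in `S`.

If `F` is positive on all loops in `S`, then up to a coboundary `F ≥ c > 0` on the edges in `S`, and
conjugating by the potential gives `ρ(A(β)^S) ≤ exp (-(β - β') c) ρ(A(β')^S)` for `β' ≤ β`. Hence
`ρ(A(β')^{C'}) = 1` with `β' < β` forces `ρ(A(β)^{C'}) < 1`.

Conversely, a loop `μ` in `S` with `β F(μ) ≤ 0` forces `ρ(A(β)^S) ≥ 1`. This rules out nonpositive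
loops in `C̄ ∖ C`, and at `β = 0` it applies to every loop, so continuity in `β` yields `β'`. In `C`
itself a simple loop with `F(μ) ≤ 0` is left by some edge, because `C` is not circular; closing
that edge up to a second loop at the same vertex makes the total weight of the two loops exceed `1`,
which `ρ(A(β)^C) = 1` does not allow.
-/

open Topology
open scoped Matrix

section NonnegativeMatrices

variable {n : Type*} [Fintype n] [DecidableEq n] {M : Matrix n n ℝ} {u v : n → ℝ} {r θ : ℝ}

/-- The entrywise `ℓ¹`-norm of a matrix, whose growth along powers defines `specRad`. -/
def entrySum (M : Matrix n n ℝ) : ℝ := ∑ i, ∑ j, |M i j|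

omit [DecidableEq n] in
lemma entrySum_nonneg (M : Matrix n n ℝ) : 0 ≤ entrySum M :=
  sum_nonneg fun _ _ => sum_nonneg fun _ _ => abs_nonneg _

omit [DecidableEq n] in
lemma mulVec_one_apply_le_entrySum (M : Matrix n n ℝ) (i : n) : (M *ᵥ 1) i ≤ entrySum M :=
  calc (M *ᵥ 1) i = ∑ j, M i j := by simp [Matrix.mulVec, dotProduct]
    _ ≤ ∑ j, |M i j| := sum_le_sum fun j _ => le_abs_self (M i j)
    _ ≤ entrySum M := single_le_sum (f := fun i => ∑ j, |M i j|)
        (fun _ _ => sum_nonneg fun _ _ => abs_nonneg _) (mem_univ i)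

omit [DecidableEq n] in
lemma mulVec_le_mulVec_of_nonneg (hM : ∀ i j, 0 ≤ M i j) (h : u ≤ v) : M *ᵥ u ≤ M *ᵥ v :=
  fun i => dotProduct_le_dotProduct_of_nonneg_left h (hM i)

lemma pow_mulVec_le_of_mulVec_le (hM : ∀ i j, 0 ≤ M i j) (hθ : 0 ≤ θ) (hu : M *ᵥ u ≤ θ • u)
    (k : ℕ) : (M ^ k) *ᵥ u ≤ θ ^ k • u := by
  induction k with
  | zero => simp
  | succ k ih =>
    calc (M ^ (k + 1)) *ᵥ u = (M ^ k) *ᵥ (M *ᵥ u) := by rw [pow_succ, Matrix.mulVec_mulVec]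
      _ ≤ (M ^ k) *ᵥ (θ • u) := mulVec_le_mulVec_of_nonneg (Matrix.pow_apply_nonneg hM k) hu
      _ = θ • (M ^ k) *ᵥ u := Matrix.mulVec_smul ..
      _ ≤ θ • θ ^ k • u := smul_le_smul_of_nonneg_left ih hθ
      _ = θ ^ (k + 1) • u := by rw [smul_smul, pow_succ']

lemma entrySum_pow_le (hM : ∀ i j, 0 ≤ M i j) (hθ : 0 ≤ θ) (hu : ∀ i, 0 < u i)
    (h : M *ᵥ u ≤ θ • u) (k : ℕ) : entrySum (M ^ k) ≤ (∑ i, ∑ j, u i / u j) * θ ^ k := by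
  simp_rw [entrySum, sum_mul]
  gcongr with i _ j _
  have hpow := Matrix.pow_apply_nonneg hM k
  rw [abs_of_nonneg (hpow i j), div_mul_eq_mul_div, le_div_iff₀ (hu j)]
  calc (M ^ k) i j * u j ≤ ((M ^ k) *ᵥ u) i :=
        single_le_sum (f := fun j => (M ^ k) i j * u j)
          (fun j _ => mul_nonneg (hpow i j) (hu j).le) (mem_univ j)
    _ ≤ θ ^ k * u i := pow_mulVec_le_of_mulVec_le hM hθ h k i
    _ = u i * θ ^ k := mul_comm _ _

lemma tendsto_rpow_one_div_mul_pow {K : ℝ} (hK : 0 < K) (hθ : 0 ≤ θ) :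
    Tendsto (fun k : ℕ => (K * θ ^ k) ^ ((1 : ℝ) / k)) atTop (𝓝 θ) := by
  have hroot : Tendsto (fun k : ℕ => K ^ ((1 : ℝ) / k) * θ) atTop (𝓝 (K ^ (0 : ℝ) * θ)) :=
    ((Real.continuousAt_const_rpow hK.ne').tendsto.comp
      tendsto_one_div_atTop_nhds_zero_nat).mul_const θ
  rw [Real.rpow_zero, one_mul] at hroot
  refine hroot.congr' ?_
  filter_upwards [eventually_ne_atTop 0] with k hk
  rw [Real.mul_rpow hK.le (pow_nonneg hθ k), one_div, Real.pow_rpow_inv_natCast hθ hk]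

lemma exists_tendsto_and_root_entrySum_pow_le (hM : ∀ i j, 0 ≤ M i j) (hθ : 0 ≤ θ)
    (hu : ∀ i, 0 < u i) (h : M *ᵥ u ≤ θ • u) :
    ∃ g : ℕ → ℝ, Tendsto g atTop (𝓝 θ) ∧ ∀ k : ℕ, entrySum (M ^ k) ^ ((1 : ℝ) / k) ≤ g k := by
  have hK : 0 ≤ ∑ i, ∑ j, u i / u j :=
    sum_nonneg fun i _ => sum_nonneg fun j _ => (div_pos (hu i) (hu j)).le
  refine ⟨_, tendsto_rpow_one_div_mul_pow (add_pos_of_nonneg_of_pos hK one_pos) hθ, fun k => ?_⟩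
  refine Real.rpow_le_rpow (entrySum_nonneg _) ((entrySum_pow_le hM hθ hu h k).trans ?_)
    (by positivity)
  gcongr
  exact le_add_of_nonneg_right zero_le_one

lemma isBoundedUnder_root_entrySum_pow (hM : ∀ i j, 0 ≤ M i j) :
    IsBoundedUnder (· ≤ ·) atTop fun k : ℕ => entrySum (M ^ k) ^ ((1 : ℝ) / k) := by
  have h : M *ᵥ 1 ≤ entrySum M • (1 : n → ℝ) := fun i => by
    rw [Pi.smul_apply, Pi.one_apply, smul_eq_mul, mul_one]
    exact mulVec_one_apply_le_entrySum M i
  obtain ⟨g, hg, hle⟩ := exists_tendsto_and_root_entrySum_pow_le hM (entrySum_nonneg M)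
    (fun _ => one_pos) h
  exact hg.isBoundedUnder_le.mono_le (Eventually.of_forall hle)

lemma specRad_eq_limsup (M : Matrix n n ℝ) :
    specRad M = limsup (fun k : ℕ => entrySum (M ^ k) ^ ((1 : ℝ) / k)) atTop := rfl

lemma specRad_nonneg (hM : ∀ i j, 0 ≤ M i j) : 0 ≤ specRad M :=
  le_limsup_of_frequently_le
    (Frequently.of_forall fun _ => Real.rpow_nonneg (entrySum_nonneg _) _)
    (isBoundedUnder_root_entrySum_pow hM)

lemma specRad_le_of_mulVec_le (hM : ∀ i j, 0 ≤ M i j) (hθ : 0 ≤ θ) (hu : ∀ i, 0 < u i)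
    (h : M *ᵥ u ≤ θ • u) : specRad M ≤ θ := by
  obtain ⟨g, hg, hle⟩ := exists_tendsto_and_root_entrySum_pow_le hM hθ hu h
  rw [specRad_eq_limsup]
  calc _ ≤ limsup g atTop := limsup_le_limsup (Eventually.of_forall hle)
        (isCoboundedUnder_le_of_le atTop fun _ => Real.rpow_nonneg (entrySum_nonneg _) _)
        hg.isBoundedUnder_le
    _ = θ := hg.limsup_eq

lemma exists_entrySum_pow_lt_pow (hM : ∀ i j, 0 ≤ M i j) (hr : 0 ≤ r) (h : specRad M < r) :
    ∃ k ≠ 0, entrySum (M ^ k) < r ^ k := by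
  rw [specRad_eq_limsup] at h
  have hev := eventually_lt_of_limsup_lt h (isBoundedUnder_root_entrySum_pow hM)
  obtain ⟨k, hlt, hk⟩ := (hev.and (eventually_ne_atTop 0)).exists
  refine ⟨k, hk, ?_⟩
  rwa [one_div, Real.rpow_inv_lt_iff_of_pos (entrySum_nonneg _) hr (by positivity),
    Real.rpow_natCast] at hlt

lemma exists_pos_mulVec_lt_of_specRad_lt (hM : ∀ i j, 0 ≤ M i j) (hr : 0 < r)
    (h : specRad M < r) : ∃ u : n → ℝ, (∀ i, 0 < u i) ∧ ∀ i, (M *ᵥ u) i < r * u i := by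
  obtain ⟨k, hk0, hk⟩ := exists_entrySum_pow_lt_pow hM hr.le h
  let R : Matrix n n ℝ := r • 1
  let T := ∑ l ∈ range k, M ^ l * R ^ (k - 1 - l)
  have hterm (l : ℕ) : M ^ l * R ^ (k - 1 - l) = r ^ (k - 1 - l) • M ^ l := by
    rw [smul_pow, one_pow, mul_smul_comm, mul_one]
  -- Truncated Neumann series: `(M - r) * T = M ^ k - r ^ k`.
  have htel : (M - R) * T = M ^ k - R ^ k :=
    ((Commute.one_right M).smul_right r).mul_geom_sum₂ k
  have hu (i : n) : 0 < (T *ᵥ 1) i := by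
    have hsum : (T *ᵥ 1) i = ∑ l ∈ range k, r ^ (k - 1 - l) * (M ^ l *ᵥ 1) i := by
      simp only [T, hterm, Matrix.sum_mulVec, Finset.sum_apply, Matrix.smul_mulVec, Pi.smul_apply,
        smul_eq_mul]
    rw [hsum]
    refine sum_pos' (fun l _ => mul_nonneg (pow_nonneg hr.le _) ?_)
      ⟨0, by simpa using hk0.bot_lt, ?_⟩
    · exact dotProduct_nonneg_of_nonneg (Matrix.pow_apply_nonneg hM l i) (fun _ => zero_le_one)
    · simpa using pow_pos hr _
  refine ⟨T *ᵥ 1, hu, fun i => ?_⟩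
  have happ := congrFun (congrArg (· *ᵥ (1 : n → ℝ)) htel) i
  have hpow := mulVec_one_apply_le_entrySum (M ^ k) i
  simp only [R, smul_pow, one_pow, ← Matrix.mulVec_mulVec, Matrix.sub_mulVec, Matrix.smul_mulVec,
    Matrix.one_mulVec, Pi.sub_apply, Pi.smul_apply, Pi.one_apply, smul_eq_mul, mul_one] at happ
  linarith

lemma specRad_lt_iff_exists_mulVec_lt (hM : ∀ i j, 0 ≤ M i j) (hr : 0 < r) :
    specRad M < r ↔ ∃ u : n → ℝ, (∀ i, 0 < u i) ∧ ∀ i, (M *ᵥ u) i < r * u i := by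
  refine ⟨exists_pos_mulVec_lt_of_specRad_lt hM hr, fun ⟨u, hu, hlt⟩ => ?_⟩
  have hev : ∀ᶠ θ in 𝓝[<] r, ∀ i, (M *ᵥ u) i < θ * u i :=
    eventually_all.2 fun i => nhdsWithin_le_nhds <|
      (continuous_mul_const (u i)).continuousAt.eventually_const_lt (hlt i)
  obtain ⟨θ, hθu, hθ⟩ := (hev.and (Ioo_mem_nhdsLT hr)).exists
  exact (specRad_le_of_mulVec_le hM hθ.1.le hu fun i => (hθu i).le).trans_lt hθ.2

end NonnegativeMatrices

section Submatrices

variable [Fintype V] {B B' : Matrix V V ℝ} {S T P Q : Set V} {u : V → ℝ} {r t : ℝ}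

/-- A positive strict supersolution of `B u = r u` on the set `S`, the witness for
`specRadOn B S < r`; only the values of `u` on `S` matter. -/
def IsStrictSuperharmonicOn (B : Matrix V V ℝ) (S : Set V) (r : ℝ) (u : V → ℝ) : Prop :=
  ∀ v ∈ S, 0 < u v ∧ (B *ᵥ S.indicator u) v < r * u v

lemma IsStrictSuperharmonicOn.indicator_nonneg (hu : IsStrictSuperharmonicOn B S r u) :
    0 ≤ S.indicator u :=
  fun _ => Set.indicator_nonneg (fun v hv => (hu v hv).1.le) _

lemma specRadOn_eq_specRad_submatrix (B : Matrix V V ℝ) (S : Set V) [Fintype S] [DecidableEq S] :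
    specRadOn B S = specRad (B.submatrix (Subtype.val : S → V) Subtype.val) := by
  obtain rfl : ‹Fintype S› = S.toFinite.fintype := Subsingleton.elim ..
  obtain rfl : ‹DecidableEq S› = Classical.decEq S := Subsingleton.elim ..
  rfl

lemma specRadOn_nonneg (hB : ∀ v w, 0 ≤ B v w) (S : Set V) : 0 ≤ specRadOn B S := by
  classical
  rw [specRadOn_eq_specRad_submatrix]
  exact specRad_nonneg fun i j => hB i j

lemma mulVec_indicator_apply (B : Matrix V V ℝ) (S : Set V) [DecidablePred (· ∈ S)] (u : V → ℝ)
    (v : S) : (B *ᵥ S.indicator u) v =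
      (B.submatrix (Subtype.val : S → V) Subtype.val *ᵥ fun w : S => u w) v := by
  refine sum_congr_set S (fun w => B v w * S.indicator u w) (fun w : S => B v w * u w)
    (fun w hw => ?_) fun w hw => ?_
  · rw [Set.indicator_of_mem hw]
  · rw [Set.indicator_of_notMem hw, mul_zero]

lemma mulVec_indicator_eq_zero {v : V} (h : ∀ w ∈ S, B v w = 0) : (B *ᵥ S.indicator u) v = 0 := by
  refine Finset.sum_eq_zero fun w _ => ?_
  change B v w * S.indicator u w = 0
  by_cases hw : w ∈ S
  · rw [h w hw, zero_mul]
  · rw [Set.indicator_of_notMem hw, mul_zero]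

lemma specRadOn_lt_iff (hB : ∀ v w, 0 ≤ B v w) (hr : 0 < r) :
    specRadOn B S < r ↔ ∃ u, IsStrictSuperharmonicOn B S r u := by
  classical
  rw [specRadOn_eq_specRad_submatrix,
    specRad_lt_iff_exists_mulVec_lt (fun i j : S => show 0 ≤ B.submatrix _ _ i j from hB i j) hr]
  constructor
  · rintro ⟨u, hpos, hlt⟩
    have hext (v : S) : (if h : (v : V) ∈ S then u ⟨v, h⟩ else 0) = u v := dif_pos v.2
    refine ⟨fun v => if h : v ∈ S then u ⟨v, h⟩ else 0, fun v hv => ?_⟩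
    lift v to S using hv
    simp_rw [mulVec_indicator_apply, hext]
    exact ⟨hpos v, hlt v⟩
  · rintro ⟨u, hu⟩
    exact ⟨fun v => u v, fun v => (hu v v.2).1, fun v =>
      mulVec_indicator_apply B S u v ▸ (hu v v.2).2⟩

lemma specRadOn_mono (hB : ∀ v w, 0 ≤ B v w) (hST : S ⊆ T) : specRadOn B S ≤ specRadOn B T := by
  refine le_of_forall_gt_imp_ge_of_dense fun r hr => ?_
  have hr0 := (specRadOn_nonneg hB T).trans_lt hr
  obtain ⟨u, hu⟩ := (specRadOn_lt_iff hB hr0).1 hr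
  have hle : S.indicator u ≤ T.indicator u :=
    Set.indicator_le' (fun v hv => (Set.indicator_of_mem (hST hv) u).ge)
      fun v _ => hu.indicator_nonneg v
  exact ((specRadOn_lt_iff hB hr0).2 ⟨u, fun v hv => ⟨(hu v (hST hv)).1,
    (mulVec_le_mulVec_of_nonneg hB hle v).trans_lt (hu v (hST hv)).2⟩⟩).le

lemma specRadOn_le_mul_of_conj_le {d : V → ℝ} (hB : ∀ v w, 0 ≤ B v w) (hB' : ∀ v w, 0 ≤ B' v w)
    (ht : 0 < t) (hd : ∀ v, 0 < d v)
    (h : ∀ v ∈ S, ∀ w ∈ S, B v w * d w ≤ t * d v * B' v w) :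
    specRadOn B S ≤ t * specRadOn B' S := by
  rw [← div_le_iff₀' ht]
  refine le_of_forall_gt_imp_ge_of_dense fun r hr => ?_
  have hr0 := (specRadOn_nonneg hB' S).trans_lt hr
  obtain ⟨u, hu⟩ := (specRadOn_lt_iff hB' hr0).1 hr
  rw [div_le_iff₀' ht]
  refine ((specRadOn_lt_iff hB (mul_pos ht hr0)).2
    ⟨fun v => d v * u v, fun v hv => ⟨mul_pos (hd v) (hu v hv).1, ?_⟩⟩).le
  calc (B *ᵥ S.indicator fun v => d v * u v) v
      ≤ ∑ w, t * d v * (B' v w * S.indicator u w) := sum_le_sum fun w _ => by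
        by_cases hw : w ∈ S
        · rw [Set.indicator_of_mem hw, Set.indicator_of_mem hw, ← mul_assoc, ← mul_assoc]
          exact mul_le_mul_of_nonneg_right (h v hv w hw) (hu w hw).1.le
        · simp [hw]
    _ = t * d v * (B' *ᵥ S.indicator u) v := (mul_sum ..).symm
    _ < t * d v * (r * u v) := mul_lt_mul_of_pos_left (hu v hv).2 (mul_pos ht (hd v))
    _ = t * r * (d v * u v) := by ring

lemma specRadOn_union_lt (hB : ∀ v w, 0 ≤ B v w) (hr : 0 < r) (hPQ : Disjoint P Q)
    (hzero : ∀ v ∈ Q, ∀ w ∈ P, B v w = 0) (hP : specRadOn B P < r) (hQ : specRadOn B Q < r) :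
    specRadOn B (P ∪ Q) < r := by
  obtain ⟨p, hp⟩ := (specRadOn_lt_iff hB hr).1 hP
  obtain ⟨q, hq⟩ := (specRadOn_lt_iff hB hr).1 hQ
  -- Strictness on `P` absorbs the coupling from `P` to `Q` once `q` is scaled down.
  have hsmall : ∀ᶠ ε : ℝ in 𝓝[>] 0, ∀ v : V, v ∈ P →
      (B *ᵥ P.indicator p) v + ε * (B *ᵥ Q.indicator q) v < r * p v := by
    refine eventually_all.2 fun v => eventually_imp_distrib_left.2 fun hv => nhdsWithin_le_nhds ?_
    refine Continuous.tendsto' (by fun_prop) _ _ ?_ |>.eventually_lt_const (hp v hv).2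
    simp
  obtain ⟨ε, hε, hε0⟩ := (hsmall.and self_mem_nhdsWithin).exists
  let u := P.indicator p + ε • Q.indicator q
  have huP {v : V} (hv : v ∈ P) : u v = p v := by simp [u, hv, hPQ.notMem_of_mem_left hv]
  have huQ {v : V} (hv : v ∈ Q) : u v = ε * q v := by simp [u, hv, hPQ.notMem_of_mem_right hv]
  have hsupp : (P ∪ Q).indicator u = u := Set.indicator_eq_self.2 fun v hv => by
    by_contra hnot
    exact hv (by simp [u, not_or.1 hnot])
  have hmul (v : V) : (B *ᵥ (P ∪ Q).indicator u) v =
      (B *ᵥ P.indicator p) v + ε * (B *ᵥ Q.indicator q) v := by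
    simp [hsupp, u, Matrix.mulVec_add, Matrix.mulVec_smul]
  refine (specRadOn_lt_iff hB hr).2 ⟨u, fun v hv => ?_⟩
  rw [hmul]
  rcases hv with hv | hv
  · rw [huP hv]
    exact ⟨(hp v hv).1, hε v hv⟩
  · have hBP : (B *ᵥ P.indicator p) v = 0 := mulVec_indicator_eq_zero (hzero v hv)
    rw [huQ hv, hBP, zero_add, mul_left_comm]
    exact ⟨mul_pos hε0 (hq v hv).1, mul_lt_mul_of_pos_left (hq v hv).2 hε0⟩

lemma specRadOn_lt_of_forall_zero (hB : ∀ v w, 0 ≤ B v w) (hr : 0 < r)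
    (h : ∀ v ∈ S, ∀ w ∈ S, B v w = 0) : specRadOn B S < r := by
  refine (specRadOn_lt_iff hB hr).2 ⟨1, fun v hv => ⟨one_pos, ?_⟩⟩
  rwa [mulVec_indicator_eq_zero (h v hv), Pi.one_apply, mul_one]

/-- The class of a vertex of `S` from which the fewest vertices can be reached splits off as a
diagonal block. -/
lemma specRadOn_lt_of_forall_class {R : V → V → Prop} (hrefl : ∀ v, R v v)
    (htrans : ∀ {u v w}, R u v → R v w → R u w) (hB : ∀ v w, 0 ≤ B v w)
    (hR : ∀ v w, B v w ≠ 0 → R v w) (hr : 0 < r)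
    (hclass : ∀ v ∈ S, specRadOn B {w | R v w ∧ R w v} < r) : specRadOn B S < r := by
  induction S using WellFoundedLT.induction with
  | ind S ih =>
    obtain rfl | hne := S.eq_empty_or_nonempty
    · exact specRadOn_lt_of_forall_zero hB hr fun v hv => hv.elim
    obtain ⟨v, hv, hmin⟩ := S.toFinite.exists_minimalFor (fun v => {w | R v w}) S hne
    have hterminal {w : V} (hw : w ∈ S) (hvw : R v w) : R w v :=
      hmin hw (fun _ h => htrans hvw h) (hrefl v)
    rw [← Set.sdiff_union_inter S {w | R v w ∧ R w v}]
    refine specRadOn_union_lt hB hr Set.disjoint_sdiff_inter ?_ ?_ ?_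
    · rintro w ⟨-, hvw, -⟩ z ⟨hz, hzv⟩
      by_contra hwz
      have hvz := htrans hvw (hR w z hwz)
      exact hzv ⟨hvz, hterminal hz hvz⟩
    · refine ih _ ⟨Set.sdiff_subset, fun hsub => (hsub hv).2 ⟨hrefl v, hrefl v⟩⟩
        fun w hw => hclass w hw.1
    · exact (specRadOn_mono hB Set.inter_subset_right).trans_lt (hclass v hv)

end Submatrices

section Paths

variable {src rng : E → V} {F : E → ℝ} {C S T : Set V} {e f : E} {μ ν : List E} {u v w : V}

/-- `μ` is a path from `v` to `w` all of whose edges join vertices of `S`; the empty list is the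
path of length `0` at any vertex, in `S` or not. Loops and reachability are handled through this
recursive form. -/
def IsPathIn (src rng : E → V) (S : Set V) : V → List E → V → Prop
  | v, [], w => v = w
  | v, e :: μ, w => src e = v ∧ src e ∈ S ∧ rng e ∈ S ∧ IsPathIn src rng S (rng e) μ w

lemma isPathIn_append :
    IsPathIn src rng S v (μ ++ ν) w ↔
      ∃ z, IsPathIn src rng S v μ z ∧ IsPathIn src rng S z ν w := by
  induction μ generalizing v with
  | nil => simp [IsPathIn]
  | cons e μ ih => simp [IsPathIn, ih, and_assoc]

lemma IsPathIn.mono (hST : S ⊆ T) (h : IsPathIn src rng S v μ w) : IsPathIn src rng T v μ w := by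
  induction μ generalizing v with
  | nil => exact h
  | cons e μ ih => exact ⟨h.1, hST h.2.1, hST h.2.2.1, ih h.2.2.2⟩

lemma IsPathIn.source_mem (h : IsPathIn src rng S v μ w) (hμ : μ ≠ []) : v ∈ S := by
  cases μ with
  | nil => exact (hμ rfl).elim
  | cons e μ => exact h.1 ▸ h.2.1

lemma IsPathIn.rng_eq_or_mem (h : IsPathIn src rng S v μ w) (he : e ∈ μ) :
    rng e = w ∨ rng e ∈ μ.map src := by
  induction μ generalizing v with
  | nil => simp at he
  | cons f μ ih =>
    obtain ⟨-, -, -, hμ⟩ := h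
    rcases List.mem_cons.1 he with rfl | he
    · cases μ with
      | nil => exact .inl hμ
      | cons g μ => exact .inr (by simp [hμ.1])
    · exact (ih hμ he).imp_right (List.mem_cons_of_mem _)

lemma chainOK_cons_cons :
    ChainOK src rng (e :: f :: μ) ↔ rng e = src f ∧ ChainOK src rng (f :: μ) :=
  List.isChain_cons_cons

lemma isPathIn_iff_chainOK (hμ : μ ≠ []) :
    IsPathIn src rng S v μ w ↔ (ChainOK src rng μ ∧ src (μ.head hμ) = v ∧
      rng (μ.getLast hμ) = w) ∧ ∀ e ∈ μ, src e ∈ S ∧ rng e ∈ S := by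
  induction μ generalizing v with
  | nil => exact (hμ rfl).elim
  | cons e μ ih =>
    cases μ with
    | nil =>
      have hchain : ChainOK src rng [e] := List.isChain_singleton e
      simp only [IsPathIn, List.head_cons, List.getLast_singleton, List.mem_singleton, forall_eq]
      tauto
    | cons f μ =>
      rw [IsPathIn, ih (List.cons_ne_nil f μ)]
      simp only [chainOK_cons_cons, List.head_cons, List.getLast_cons_cons, List.mem_cons,
        forall_eq_or_imp, eq_comm (a := src f)]
      tauto

lemma loopIn_iff : LoopIn src rng S μ ↔ μ ≠ [] ∧ ∃ v, IsPathIn src rng S v μ v := by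
  constructor
  · rintro ⟨⟨hμ, hchain, hends⟩, hS⟩
    exact ⟨hμ, _, (isPathIn_iff_chainOK hμ).2 ⟨⟨hchain, rfl, hends.symm⟩, hS⟩⟩
  · rintro ⟨hμ, v, h⟩
    obtain ⟨⟨hchain, hsrc, hrng⟩, hS⟩ := (isPathIn_iff_chainOK hμ).1 h
    exact ⟨⟨hμ, hchain, hsrc.trans hrng.symm⟩, hS⟩

lemma LoopIn.mono (hST : S ⊆ T) (h : LoopIn src rng S μ) : LoopIn src rng T μ :=
  ⟨h.1, fun e he => (h.2 e he).imp (@hST _) (@hST _)⟩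

lemma gReaches_iff : GReaches src rng v w ↔ ∃ μ, IsPathIn src rng Set.univ v μ w := by
  constructor
  · rintro (rfl | ⟨μ, hμ, h⟩)
    · exact ⟨[], rfl⟩
    · exact ⟨μ, (isPathIn_iff_chainOK hμ).2 ⟨h, fun _ _ => ⟨trivial, trivial⟩⟩⟩
  · rintro ⟨μ, h⟩
    by_cases hμ : μ = []
    · subst hμ
      exact .inl h
    · exact .inr ⟨μ, hμ, ((isPathIn_iff_chainOK hμ).1 h).1⟩

lemma GReaches.refl (src rng : E → V) (v : V) : GReaches src rng v v := .inl rfl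

lemma GReaches.trans (huv : GReaches src rng u v) (hvw : GReaches src rng v w) :
    GReaches src rng u w := by
  obtain ⟨μ, hμ⟩ := gReaches_iff.1 huv
  obtain ⟨ν, hν⟩ := gReaches_iff.1 hvw
  exact gReaches_iff.2 ⟨μ ++ ν, isPathIn_append.2 ⟨v, hμ, hν⟩⟩

lemma gReaches_edge (src rng : E → V) (e : E) : GReaches src rng (src e) (rng e) :=
  gReaches_iff.2 ⟨[e], rfl, trivial, trivial, rfl⟩

/-- The class of `v` under mutual reachability; unlike a component it need not contain a loop. -/
def gClass (src rng : E → V) (v : V) : Set V := {w | GReaches src rng v w ∧ GReaches src rng w v}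

lemma mem_gClass_self (src rng : E → V) (v : V) : v ∈ gClass src rng v :=
  ⟨.refl src rng v, .refl src rng v⟩

lemma isPathIn_gClass (h : IsPathIn src rng Set.univ v μ w) (hv : v ∈ gClass src rng u)
    (hw : w ∈ gClass src rng u) : IsPathIn src rng (gClass src rng u) v μ w := by
  induction μ generalizing v with
  | nil => exact h
  | cons e μ ih =>
    obtain ⟨rfl, -, -, hμ⟩ := h
    have hrng : rng e ∈ gClass src rng u :=
      ⟨hv.1.trans (gReaches_edge src rng e), (gReaches_iff.2 ⟨μ, hμ⟩).trans hw.2⟩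
    exact ⟨rfl, hv, hrng, ih hμ hrng⟩

lemma exists_isPathIn_gClass (hv : v ∈ gClass src rng u) (hw : w ∈ gClass src rng u) :
    ∃ μ, IsPathIn src rng (gClass src rng u) v μ w := by
  obtain ⟨μ, hμ⟩ := gReaches_iff.1 (hv.2.trans hw.1)
  exact ⟨μ, isPathIn_gClass hμ hv hw⟩

lemma gClass_subset_gClosure_diff
    (hv : v ∈ GClosure src rng (gClass src rng u) \ gClass src rng u) :
    gClass src rng v ⊆ GClosure src rng (gClass src rng u) \ gClass src rng u := by
  obtain ⟨⟨c, hc, hvc⟩, hvu⟩ := hv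
  exact fun w hw => ⟨⟨c, hc, hw.2.trans hvc⟩, fun hwu =>
    hvu ⟨hwu.1.trans hw.2, hvc.trans hc.2⟩⟩

lemma Fpath_append : Fpath F (μ ++ ν) = Fpath F μ + Fpath F ν := by simp [Fpath]

lemma Fpath_perm (h : μ.Perm ν) : Fpath F μ = Fpath F ν := (h.map F).sum_eq

lemma IsPathIn.exists_loop_of_not_nodup (h : IsPathIn src rng S v μ w)
    (hdup : ¬ (μ.map src).Nodup) :
    ∃ lp ν, LoopIn src rng S lp ∧ (lp.map src).Nodup ∧ IsPathIn src rng S v ν w ∧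
      μ.Perm (lp ++ ν) := by
  induction μ generalizing v with
  | nil => exact (hdup List.nodup_nil).elim
  | cons e μ ih =>
    obtain ⟨rfl, heS, hrS, hμ⟩ := h
    by_cases hnd : (μ.map src).Nodup
    · have hmem : src e ∈ μ.map src := by
        by_contra hnot
        exact hdup (List.nodup_cons.2 ⟨hnot, hnd⟩)
      obtain ⟨f, hf, hfe⟩ := List.mem_map.1 hmem
      obtain ⟨b, c, rfl⟩ := List.append_of_mem hf
      obtain ⟨z, hb, hc⟩ := isPathIn_append.1 hμ
      obtain rfl : src e = z := hfe ▸ hc.1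
      refine ⟨e :: b, f :: c, loopIn_iff.2 ⟨by simp, _, rfl, heS, hrS, hb⟩, ?_, hc, .refl _⟩
      rw [List.map_append, List.map_cons, hfe, List.nodup_middle] at hnd
      exact hnd.sublist (by simp)
    · obtain ⟨lp, ν, hlp, hlpnd, hν, hperm⟩ := ih hμ hnd
      exact ⟨lp, e :: ν, hlp, hlpnd, ⟨rfl, heS, hrS, hν⟩,
        (hperm.cons e).trans List.perm_middle.symm⟩

lemma LoopIn.exists_nodup_Fpath_nonpos (h : LoopIn src rng S μ) (hF : Fpath F μ ≤ 0) :
    ∃ ν, LoopIn src rng S ν ∧ (ν.map src).Nodup ∧ Fpath F ν ≤ 0 := by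
  induction hn : μ.length using Nat.strong_induction_on generalizing μ with
  | h n ih =>
    by_cases hnd : (μ.map src).Nodup
    · exact ⟨μ, h, hnd, hF⟩
    obtain ⟨-, v, hpath⟩ := loopIn_iff.1 h
    obtain ⟨lp, ν, hlp, hlpnd, hν, hperm⟩ := hpath.exists_loop_of_not_nodup hnd
    rw [Fpath_perm hperm, Fpath_append] at hF
    by_cases hlpF : Fpath F lp ≤ 0
    · exact ⟨lp, hlp, hlpnd, hlpF⟩
    · have hν0 : ν ≠ [] := by
        rintro rfl
        exact hlpF (by simpa [Fpath] using hF)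
      have hlen := hperm.length_eq
      have hlp0 := List.length_pos_iff.2 (loopIn_iff.1 hlp).1
      rw [List.length_append] at hlen
      exact ih ν.length (by omega) (loopIn_iff.2 ⟨hν0, v, hν⟩) (by linarith) rfl

lemma IsPathIn.exists_nodup_Fpath_le (hpos : ∀ ν, LoopIn src rng S ν → 0 ≤ Fpath F ν)
    (h : IsPathIn src rng S v μ w) :
    ∃ ν, IsPathIn src rng S v ν w ∧ (ν.map src).Nodup ∧ Fpath F ν ≤ Fpath F μ := by
  induction hn : μ.length using Nat.strong_induction_on generalizing μ with
  | h n ih =>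
    by_cases hnd : (μ.map src).Nodup
    · exact ⟨μ, h, hnd, le_rfl⟩
    obtain ⟨lp, ν, hlp, -, hν, hperm⟩ := h.exists_loop_of_not_nodup hnd
    have hlen := hperm.length_eq
    have hlp0 := List.length_pos_iff.2 (loopIn_iff.1 hlp).1
    rw [List.length_append] at hlen
    obtain ⟨κ, hκ, hκnd, hle⟩ := ih ν.length (by omega) hν rfl
    refine ⟨κ, hκ, hκnd, hle.trans ?_⟩
    rw [Fpath_perm hperm, Fpath_append]
    exact le_add_of_nonneg_left (hpos lp hlp)

lemma finite_setOf_nodup_map [Finite E] (src : E → V) :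
    {μ : List E | (μ.map src).Nodup}.Finite := by
  classical
  have := Fintype.ofFinite E
  have hnodup : {μ : List E | μ.Nodup}.Finite :=
    Set.finite_coe_iff.1 (inferInstance : Finite {μ : List E // μ.Nodup})
  exact hnodup.subset fun _ => List.Nodup.of_map src

/-- `h v` is the least value of `F` on the paths in `S` that start at `v`. -/
lemma exists_potential_of_loop_nonneg [Finite E]
    (hpos : ∀ μ, LoopIn src rng S μ → 0 ≤ Fpath F μ) :
    ∃ h : V → ℝ, ∀ e, src e ∈ S → rng e ∈ S → h (src e) ≤ F e + h (rng e) := by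
  have hmin (v : V) : ∃ μ, (∃ w, IsPathIn src rng S v μ w) ∧
      ∀ ν, (∃ w, IsPathIn src rng S v ν w) → Fpath F μ ≤ Fpath F ν := by
    obtain ⟨μ, ⟨-, hμ⟩, hle⟩ := Set.exists_min_image
      ({ν : List E | (ν.map src).Nodup} ∩ {ν | ∃ w, IsPathIn src rng S v ν w}) (Fpath F)
      ((finite_setOf_nodup_map src).inter_of_left _) ⟨[], List.nodup_nil, v, rfl⟩
    refine ⟨μ, hμ, fun ν ⟨w, hν⟩ => ?_⟩
    obtain ⟨κ, hκ, hnd, hκν⟩ := hν.exists_nodup_Fpath_le hpos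
    exact (hle κ ⟨hnd, w, hκ⟩).trans hκν
  choose p hp hle using hmin
  refine ⟨fun v => Fpath F (p v), fun e hs hr => ?_⟩
  obtain ⟨w, hw⟩ := hp (rng e)
  exact hle (src e) (e :: p (rng e)) ⟨w, rfl, hs, hr, hw⟩

lemma exists_pos_forall_loop_sub_nonneg [Finite E]
    (hpos : ∀ μ, LoopIn src rng S μ → 0 < Fpath F μ) :
    ∃ c > 0, ∀ μ, LoopIn src rng S μ → 0 ≤ Fpath (fun e => F e - c) μ := by
  have hev : ∀ᶠ c : ℝ in 𝓝[>] 0, ∀ μ ∈ {μ : List E | (μ.map src).Nodup},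
      LoopIn src rng S μ → 0 < Fpath (fun e => F e - c) μ := by
    refine (finite_setOf_nodup_map src).eventually_all.2 fun μ _ =>
      eventually_imp_distrib_left.2 fun hμ => nhdsWithin_le_nhds ?_
    refine Continuous.tendsto' ?_ _ _ ?_ |>.eventually_const_lt (hpos μ hμ)
    · unfold Fpath
      fun_prop
    · simp
  obtain ⟨c, hc, hc0⟩ := (hev.and self_mem_nhdsWithin).exists
  refine ⟨c, hc0, fun μ hμ => ?_⟩
  by_contra! hneg
  obtain ⟨ν, hν, hnd, hle⟩ := hμ.exists_nodup_Fpath_nonpos hneg.le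
  exact (hc ν hnd hν).not_ge hle

lemma exists_strict_potential_of_loop_pos [Finite E]
    (hpos : ∀ μ, LoopIn src rng S μ → 0 < Fpath F μ) :
    ∃ c > 0, ∃ h : V → ℝ, ∀ e, src e ∈ S → rng e ∈ S → c + h (src e) ≤ F e + h (rng e) := by
  obtain ⟨c, hc, hnonneg⟩ := exists_pos_forall_loop_sub_nonneg hpos
  obtain ⟨h, hh⟩ := exists_potential_of_loop_nonneg hnonneg
  exact ⟨c, hc, h, fun e hs hr => by linarith [hh e hs hr]⟩

/-- A simple loop that no edge of the component leaves would exhaust the component. -/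
lemma exists_branch_of_not_isCircular (hC : GIsComponent src rng C) (hnc : ¬ IsCircular src rng C)
    (hμ : LoopIn src rng C μ) (hnd : (μ.map src).Nodup) :
    ∃ f ∈ μ, ∃ e ∉ μ, src e = src f ∧ rng e ∈ C := by
  by_contra! hno
  obtain ⟨hμ0, v, hv⟩ := loopIn_iff.1 hμ
  have hvμ : v ∈ μ.map src := by
    cases μ with
    | nil => exact (hμ0 rfl).elim
    | cons f μ => simp [hv.1]
  have hedge {e : E} (he : src e ∈ μ.map src) (hr : rng e ∈ C) : e ∈ μ := by
    obtain ⟨f, hf, hfe⟩ := List.mem_map.1 he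
    by_contra hnot
    exact hno f hf e hnot hfe.symm hr
  have hclosed {ν : List E} {w z : V} (hw : w ∈ μ.map src) (hν : IsPathIn src rng C w ν z) :
      z ∈ μ.map src := by
    induction ν generalizing w with
    | nil => exact hν ▸ hw
    | cons e ν ih =>
      obtain ⟨rfl, -, hr, hν⟩ := hν
      refine ih ?_ hν
      rcases hv.rng_eq_or_mem (hedge hw hr) with h | h
      · exact h ▸ hvμ
      · exact h
  obtain ⟨⟨u, rfl⟩, -⟩ := id hC
  have hcover (z : V) (hz : z ∈ gClass src rng u) : z ∈ μ.map src := by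
    obtain ⟨ν, hν⟩ := exists_isPathIn_gClass (hv.source_mem hμ0) hz
    exact hclosed hvμ hν
  exact hnc ⟨hC, μ, hμ, hnd, hcover, fun e hs hr => hedge (hcover _ hs) hr⟩

end Paths

section GibbsWeights

variable [Fintype V] [DecidableEq V] [Fintype E] {src rng : E → V} {F : E → ℝ} {β β' r : ℝ}
  {C S : Set V} {e f : E} {μ ν : List E} {u : V → ℝ} {v w : V}

omit [Fintype V] in
lemma Amat_nonneg (src rng : E → V) (F : E → ℝ) (β : ℝ) (v w : V) : 0 ≤ Amat src rng F β v w :=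
  sum_nonneg fun _ _ => (Real.exp_pos _).le

omit [Fintype V] in
lemma exists_edge_of_Amat_ne_zero (h : Amat src rng F β v w ≠ 0) :
    ∃ e, src e = v ∧ rng e = w := by
  obtain ⟨e, he, -⟩ := exists_ne_zero_of_sum_ne_zero h
  exact ⟨e, (mem_filter.1 he).2⟩

lemma Amat_mulVec_apply (g : V → ℝ) (v : V) :
    (Amat src rng F β *ᵥ g) v = ∑ e with src e = v, Real.exp (-β * F e) * g (rng e) := by
  calc (Amat src rng F β *ᵥ g) v
      = ∑ w, ∑ e with src e = v ∧ rng e = w, Real.exp (-β * F e) * g w :=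
        sum_congr rfl fun w _ => sum_mul ..
    _ = ∑ w, ∑ e with src e = v ∧ rng e = w, Real.exp (-β * F e) * g (rng e) :=
        sum_congr rfl fun w _ => sum_congr rfl fun e he => by rw [(mem_filter.1 he).2.2]
    _ = ∑ e with src e = v, Real.exp (-β * F e) * g (rng e) := by
        simp_rw [← filter_filter]
        exact sum_fiberwise _ _ _

lemma specRadOn_Amat_le_exp_mul {h : V → ℝ} {a : ℝ}
    (hedge : ∀ e, src e ∈ S → rng e ∈ S → h (rng e) - β * F e ≤ a + h (src e) - β' * F e) :
    specRadOn (Amat src rng F β) S ≤ Real.exp a * specRadOn (Amat src rng F β') S := by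
  refine specRadOn_le_mul_of_conj_le (d := fun v => Real.exp (h v)) (Amat_nonneg src rng F β)
    (Amat_nonneg src rng F β') (Real.exp_pos a) (fun v => Real.exp_pos _) fun v hv w hw => ?_
  simp_rw [Amat, sum_mul, mul_sum]
  refine sum_le_sum fun e he => ?_
  obtain ⟨rfl, rfl⟩ := (mem_filter.1 he).2
  rw [← Real.exp_add, ← Real.exp_add, ← Real.exp_add, Real.exp_le_exp]
  linarith [hedge e hv hw]

lemma specRadOn_Amat_le_exp_abs_mul (x y : ℝ) :
    specRadOn (Amat src rng F y) S ≤
      Real.exp ((∑ e, |F e|) * |y - x|) * specRadOn (Amat src rng F x) S := by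
  refine specRadOn_Amat_le_exp_mul (h := 0) fun e _ _ => ?_
  have hbound : (x - y) * F e ≤ (∑ e, |F e|) * |y - x| :=
    calc (x - y) * F e ≤ |F e| * |y - x| := by
          rw [abs_sub_comm, mul_comm, ← abs_mul]
          exact le_abs_self _
      _ ≤ (∑ e, |F e|) * |y - x| := mul_le_mul_of_nonneg_right
          (single_le_sum (f := fun e => |F e|) (fun e _ => abs_nonneg _) (mem_univ e))
          (abs_nonneg _)
  simp only [Pi.zero_apply]
  linarith

lemma continuous_specRadOn_Amat (src rng : E → V) (F : E → ℝ) (S : Set V) :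
    Continuous fun β => specRadOn (Amat src rng F β) S := by
  refine continuous_iff_continuousAt.2 fun x => ?_
  refine tendsto_of_tendsto_of_tendsto_of_le_of_le
    (g := fun y => (Real.exp ((∑ e, |F e|) * |x - y|))⁻¹ * specRadOn (Amat src rng F x) S)
    (h := fun y => Real.exp ((∑ e, |F e|) * |y - x|) * specRadOn (Amat src rng F x) S)
    (Continuous.tendsto' ?_ _ _ ?_) (Continuous.tendsto' ?_ _ _ ?_) (fun y => ?_) fun y => ?_
  · exact Continuous.mul (Continuous.inv₀ (by fun_prop) fun y => (Real.exp_pos _).ne')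
      continuous_const
  · simp
  · fun_prop
  · simp
  · exact (inv_mul_le_iff₀ (Real.exp_pos _)).2 (specRadOn_Amat_le_exp_abs_mul y x)
  · exact specRadOn_Amat_le_exp_abs_mul x y

lemma specRadOn_Amat_lt_one_of_loop_pos (hpos : ∀ μ, LoopIn src rng S μ → 0 < Fpath F μ)
    (hlt : β' < β) (hβ' : specRadOn (Amat src rng F β') S ≤ 1) :
    specRadOn (Amat src rng F β) S < 1 := by
  obtain ⟨c, hc, h, hh⟩ := exists_strict_potential_of_loop_pos hpos
  have hδ : 0 < β - β' := sub_pos.2 hlt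
  have hle := specRadOn_Amat_le_exp_mul (src := src) (rng := rng) (F := F) (β := β) (β' := β')
    (S := S) (h := fun v => -((β - β') * h v)) (a := -((β - β') * c)) fun e hs hr => by
      linarith [mul_le_mul_of_nonneg_left (hh e hs hr) hδ.le]
  exact (hle.trans (mul_le_of_le_one_right (Real.exp_pos _).le hβ')).trans_lt
    (Real.exp_lt_one_iff.2 (neg_lt_zero.2 (mul_pos hδ hc)))

lemma IsStrictSuperharmonicOn.sum_edges_lt (hu : IsStrictSuperharmonicOn (Amat src rng F β) S r u)
    {s : Finset E} (hv : v ∈ S) (hs : ∀ e ∈ s, src e = v ∧ rng e ∈ S) :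
    ∑ e ∈ s, Real.exp (-β * F e) * u (rng e) < r * u v :=
  calc ∑ e ∈ s, Real.exp (-β * F e) * u (rng e)
      = ∑ e ∈ s, Real.exp (-β * F e) * S.indicator u (rng e) :=
        sum_congr rfl fun e he => by rw [Set.indicator_of_mem (hs e he).2]
    _ ≤ ∑ e with src e = v, Real.exp (-β * F e) * S.indicator u (rng e) :=
        sum_le_sum_of_subset_of_nonneg (fun e he => mem_filter.2 ⟨mem_univ e, (hs e he).1⟩)
          fun e _ _ => mul_nonneg (Real.exp_pos _).le (hu.indicator_nonneg _)
    _ = (Amat src rng F β *ᵥ S.indicator u) v := (Amat_mulVec_apply _ v).symm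
    _ < r * u v := (hu v hv).2

omit [Fintype V] [DecidableEq V] [Fintype E] in
lemma exp_Fpath_cons (F : E → ℝ) (β : ℝ) (e : E) (μ : List E) :
    Real.exp (-β * Fpath F (e :: μ)) = Real.exp (-β * F e) * Real.exp (-β * Fpath F μ) := by
  rw [← Real.exp_add, ← mul_add, Fpath, Fpath, List.map_cons, List.sum_cons]

lemma IsStrictSuperharmonicOn.exp_path_mul_le
    (hu : IsStrictSuperharmonicOn (Amat src rng F β) S r u) (hr : 0 ≤ r)
    (hμ : IsPathIn src rng S v μ w) :
    Real.exp (-β * Fpath F μ) * u w ≤ r ^ μ.length * u v := by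
  induction μ generalizing v with
  | nil =>
    obtain rfl : v = w := hμ
    simp [Fpath]
  | cons e μ ih =>
    obtain ⟨rfl, hs, hrng, hμ⟩ := hμ
    have hedge : Real.exp (-β * F e) * u (rng e) ≤ r * u (src e) := by
      simpa using (hu.sum_edges_lt (s := {e}) hs (by simpa using hrng)).le
    calc Real.exp (-β * Fpath F (e :: μ)) * u w
        = Real.exp (-β * F e) * (Real.exp (-β * Fpath F μ) * u w) := by
          rw [exp_Fpath_cons, mul_assoc]
      _ ≤ Real.exp (-β * F e) * (r ^ μ.length * u (rng e)) :=
          mul_le_mul_of_nonneg_left (ih hμ) (Real.exp_pos _).le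
      _ = r ^ μ.length * (Real.exp (-β * F e) * u (rng e)) := mul_left_comm ..
      _ ≤ r ^ μ.length * (r * u (src e)) :=
          mul_le_mul_of_nonneg_left hedge (pow_nonneg hr _)
      _ = r ^ (e :: μ).length * u (src e) := by rw [List.length_cons, pow_succ, mul_assoc]

lemma one_le_specRadOn_Amat_of_loop (hμ : LoopIn src rng S μ) (hF : β * Fpath F μ ≤ 0) :
    1 ≤ specRadOn (Amat src rng F β) S := by
  by_contra! hlt
  obtain ⟨hμ0, v, hv⟩ := loopIn_iff.1 hμ
  obtain ⟨r, hr, hr1⟩ := exists_between hlt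
  have hr0 := (specRadOn_nonneg (Amat_nonneg src rng F β) S).trans_lt hr
  obtain ⟨u, hu⟩ := (specRadOn_lt_iff (Amat_nonneg src rng F β) hr0).1 hr
  have hle := le_of_mul_le_mul_right (hu.exp_path_mul_le hr0.le hv) (hu v (hv.source_mem hμ0)).1
  have hexp : 1 ≤ Real.exp (-β * Fpath F μ) := Real.one_le_exp (by linarith)
  exact (hexp.trans hle).not_gt (pow_lt_one₀ hr0.le hr1 (List.length_pos_iff.2 hμ0).ne')

lemma IsStrictSuperharmonicOn.exp_loop_add_exp_loop_le
    (hu : IsStrictSuperharmonicOn (Amat src rng F β) S r u) (hr : 1 ≤ r) (hef : e ≠ f)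
    (he : IsPathIn src rng S v (e :: μ) v) (hf : IsPathIn src rng S v (f :: ν) v) :
    Real.exp (-β * Fpath F (e :: μ)) + Real.exp (-β * Fpath F (f :: ν)) ≤
      r ^ (μ.length + ν.length + 1) := by
  classical
  have hv : v ∈ S := he.source_mem (List.cons_ne_nil e μ)
  have hloop {g : E} {κ : List E} (hg : IsPathIn src rng S v (g :: κ) v)
      (hκ : κ.length ≤ μ.length + ν.length) :
      Real.exp (-β * Fpath F (g :: κ)) * u v ≤
        r ^ (μ.length + ν.length) * (Real.exp (-β * F g) * u (rng g)) := by
    rw [exp_Fpath_cons, mul_assoc, mul_left_comm (r ^ _)]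
    refine mul_le_mul_of_nonneg_left ?_ (Real.exp_pos _).le
    refine (hu.exp_path_mul_le (zero_le_one.trans hr) hg.2.2.2).trans ?_
    exact mul_le_mul_of_nonneg_right (pow_le_pow_right₀ hr hκ) (hu _ hg.2.2.1).1.le
  have hedges : Real.exp (-β * F e) * u (rng e) + Real.exp (-β * F f) * u (rng f) ≤ r * u v := by
    rw [← sum_pair (f := fun g => Real.exp (-β * F g) * u (rng g)) hef]
    refine (hu.sum_edges_lt hv fun g hg => ?_).le
    rcases mem_insert.1 hg with rfl | hg
    · exact ⟨he.1, he.2.2.1⟩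
    · exact mem_singleton.1 hg ▸ ⟨hf.1, hf.2.2.1⟩
  refine le_of_mul_le_mul_right ?_ (hu v hv).1
  calc (Real.exp (-β * Fpath F (e :: μ)) + Real.exp (-β * Fpath F (f :: ν))) * u v
      ≤ r ^ (μ.length + ν.length) *
          (Real.exp (-β * F e) * u (rng e) + Real.exp (-β * F f) * u (rng f)) := by
        rw [add_mul, mul_add]
        exact add_le_add (hloop he (Nat.le_add_right ..)) (hloop hf (Nat.le_add_left ..))
    _ ≤ r ^ (μ.length + ν.length) * (r * u v) :=
        mul_le_mul_of_nonneg_left hedges (pow_nonneg (zero_le_one.trans hr) _)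
    _ = r ^ (μ.length + ν.length + 1) * u v := by rw [pow_succ, mul_assoc]

lemma exp_loop_add_exp_loop_le_one (hle : specRadOn (Amat src rng F β) S ≤ 1) (hef : e ≠ f)
    (he : IsPathIn src rng S v (e :: μ) v) (hf : IsPathIn src rng S v (f :: ν) v) :
    Real.exp (-β * Fpath F (e :: μ)) + Real.exp (-β * Fpath F (f :: ν)) ≤ 1 := by
  have hlim : Tendsto (fun r : ℝ => r ^ (μ.length + ν.length + 1)) (𝓝[>] 1) (𝓝 1) :=
    ((continuous_pow _).tendsto' 1 1 (one_pow _)).mono_left nhdsWithin_le_nhds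
  refine ge_of_tendsto hlim ?_
  filter_upwards [self_mem_nhdsWithin] with r hr
  obtain ⟨u, hu⟩ := (specRadOn_lt_iff (Amat_nonneg src rng F β) (one_pos.trans hr)).1
    (hle.trans_lt hr)
  exact hu.exp_loop_add_exp_loop_le hr.le hef he hf

/-- Otherwise a simple loop of nonpositive energy and a second loop through a branching vertex
would have total weight exceeding `1`. -/
lemma Fpath_loop_pos_of_not_isCircular (hC : GIsComponent src rng C)
    (hnc : ¬ IsCircular src rng C) (hβ : 0 ≤ β) (hle : specRadOn (Amat src rng F β) C ≤ 1)
    (hμ : LoopIn src rng C μ) : 0 < Fpath F μ := by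
  by_contra! hF
  obtain ⟨ν, hν, hnd, hFν⟩ := hμ.exists_nodup_Fpath_nonpos hF
  obtain ⟨f, hf, e, he, hef, hrng⟩ := exists_branch_of_not_isCircular hC hnc hν hnd
  obtain ⟨-, v, hv⟩ := loopIn_iff.1 hν
  obtain ⟨a, b, rfl⟩ := List.append_of_mem hf
  obtain ⟨z, ha, hfb⟩ := isPathIn_append.1 hv
  obtain rfl : src f = z := hfb.1
  have hfba : IsPathIn src rng C (src f) (f :: (b ++ a)) (src f) :=
    isPathIn_append.2 ⟨v, hfb, ha⟩
  obtain ⟨u, rfl⟩ := hC.1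
  obtain ⟨κ, hκ⟩ := exists_isPathIn_gClass hrng hfb.2.1
  have hloops := exp_loop_add_exp_loop_le_one hle (ne_of_mem_of_not_mem hf he).symm
    ⟨hef, hef ▸ hfb.2.1, hrng, hκ⟩ hfba
  have hFfba : Fpath F (f :: (b ++ a)) ≤ 0 :=
    (Fpath_perm List.perm_append_comm).trans_le hFν
  have hone : 1 ≤ Real.exp (-β * Fpath F (f :: (b ++ a))) :=
    Real.one_le_exp (mul_nonneg_of_nonpos_of_nonpos (neg_nonpos.2 hβ) hFfba)
  linarith [Real.exp_pos (-β * Fpath F (e :: κ))]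

lemma specRadOn_gClass_lt_of_forall_not_loopIn (hr : 0 < r)
    (h : ∀ μ, ¬ LoopIn src rng (gClass src rng v) μ) :
    specRadOn (Amat src rng F β) (gClass src rng v) < r := by
  refine specRadOn_lt_of_forall_zero (Amat_nonneg src rng F β) hr fun w hw z hz => ?_
  by_contra hne
  obtain ⟨e, rfl, rfl⟩ := exists_edge_of_Amat_ne_zero hne
  obtain ⟨μ, hμ⟩ := exists_isPathIn_gClass hz hw
  exact h (e :: μ) (loopIn_iff.2 ⟨List.cons_ne_nil e μ, _, rfl, hw, hz, hμ⟩)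

lemma specRadOn_Amat_lt_of_forall_gClass (hr : 0 < r)
    (h : ∀ v ∈ S, specRadOn (Amat src rng F β) (gClass src rng v) < r) :
    specRadOn (Amat src rng F β) S < r := by
  refine specRadOn_lt_of_forall_class (GReaches.refl src rng) GReaches.trans
    (Amat_nonneg src rng F β) (fun v w hne => ?_) hr h
  obtain ⟨e, rfl, rfl⟩ := exists_edge_of_Amat_ne_zero hne
  exact gReaches_edge src rng e

lemma specRadOn_Amat_lt_one_of_forall_component (hS : ∀ v ∈ S, gClass src rng v ⊆ S)
    (hpos : ∀ μ, LoopIn src rng S μ → 0 < Fpath F μ)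
    (hcomp : ∀ C, GIsComponent src rng C → C ⊆ S →
      ∃ β' < β, specRadOn (Amat src rng F β') C = 1) :
    specRadOn (Amat src rng F β) S < 1 := by
  refine specRadOn_Amat_lt_of_forall_gClass one_pos fun v hv => ?_
  by_cases hloop : ∃ μ, LoopIn src rng (gClass src rng v) μ
  · obtain ⟨β', hlt, hβ'⟩ := hcomp _ ⟨⟨v, rfl⟩, hloop⟩ (hS v hv)
    exact specRadOn_Amat_lt_one_of_loop_pos (fun μ hμ => hpos μ (hμ.mono (hS v hv))) hlt hβ'.le
  · exact specRadOn_gClass_lt_of_forall_not_loopIn one_pos (not_exists.1 hloop)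

lemma exists_specRadOn_Amat_eq_one (hμ : LoopIn src rng S μ) (hβ : 0 ≤ β)
    (hlt : specRadOn (Amat src rng F β) S < 1) :
    ∃ β' < β, specRadOn (Amat src rng F β') S = 1 := by
  have hzero : 1 ≤ specRadOn (Amat src rng F 0) S :=
    one_le_specRadOn_Amat_of_loop hμ (zero_mul _).le
  obtain ⟨β', hβ', h1⟩ := intermediate_value_Ico' hβ
    (continuous_specRadOn_Amat src rng F S).continuousOn ⟨hlt, hzero⟩
  exact ⟨β', hβ'.2, h1⟩

lemma Fpath_loop_pos_of_gClosure (hC : GIsComponent src rng C) (hnc : ¬ IsCircular src rng C)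
    (hβ : 0 ≤ β) (hle : specRadOn (Amat src rng F β) C ≤ 1)
    (hlt : (GClosure src rng C \ C).Nonempty →
      specRadOn (Amat src rng F β) (GClosure src rng C \ C) < 1)
    (hμ : LoopIn src rng (GClosure src rng C) μ) : 0 < Fpath F μ := by
  obtain ⟨hμ0, v, hv⟩ := loopIn_iff.1 hμ
  have hvcl := hv.source_mem hμ0
  replace hv := hv.mono (Set.subset_univ _)
  obtain ⟨u, rfl⟩ := id hC.1
  by_cases hvC : v ∈ gClass src rng u
  · exact Fpath_loop_pos_of_not_isCircular hC hnc hβ hle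
      (loopIn_iff.2 ⟨hμ0, v, isPathIn_gClass hv hvC hvC⟩)
  · by_contra! hF
    have hself := mem_gClass_self src rng v
    have hone := one_le_specRadOn_Amat_of_loop
      (loopIn_iff.2 ⟨hμ0, v, isPathIn_gClass hv hself hself⟩) (mul_nonpos_of_nonneg_of_nonpos hβ hF)
    have hmono := specRadOn_mono (Amat_nonneg src rng F β) (gClass_subset_gClosure_diff ⟨hvcl, hvC⟩)
    exact (hone.trans hmono).not_gt (hlt ⟨v, hvcl, hvC⟩)

end GibbsWeights

/-- For `β > 0` and a non-circular component `C`: `C` is `A(β)`-harmonic iff all loops in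
`C̄` have `F > 0`, `ρ(A(β)^C) = 1`, and every component `C' ⊆ C̄ ∖ C` satisfies
`ρ(A(β')^{C'}) = 1` for some `β' < β`. -/
theorem isAharmonic_iff_pos_noncircular {V E : Type*} [Fintype V] [DecidableEq V] [Fintype E]
    (src rng : E → V) (F : E → ℝ)
    (β : ℝ) (hβ : 0 < β)
    (C : Set V) (hC : GIsComponent src rng C) (hnc : ¬ IsCircular src rng C) :
    (specRadOn (Amat src rng F β) C = 1 ∧
      ((GClosure src rng C \ C).Nonempty →
        specRadOn (Amat src rng F β) (GClosure src rng C \ C) < 1)) ↔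
    ((∀ μ : List E, LoopIn src rng (GClosure src rng C) μ → 0 < Fpath F μ) ∧
      specRadOn (Amat src rng F β) C = 1 ∧
      (∀ C' : Set V, GIsComponent src rng C' → C' ⊆ GClosure src rng C \ C →
        ∃ β' : ℝ, β' < β ∧ specRadOn (Amat src rng F β') C' = 1)) := by
  constructor
  · rintro ⟨hone, hlt⟩
    refine ⟨fun μ hμ => Fpath_loop_pos_of_gClosure hC hnc hβ.le hone.le hlt hμ, hone,
      fun C' hC' hsub => ?_⟩
    obtain ⟨⟨v, rfl⟩, μ, hμ⟩ := hC'
    have hne : (GClosure src rng C \ C).Nonempty := ⟨v, hsub (mem_gClass_self src rng v)⟩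
    exact exists_specRadOn_Amat_eq_one hμ hβ.le
      ((specRadOn_mono (Amat_nonneg src rng F β) hsub).trans_lt (hlt hne))
  · rintro ⟨hpos, hone, hcomp⟩
    obtain ⟨⟨u, rfl⟩, -⟩ := hC
    exact ⟨hone, fun _ => specRadOn_Amat_lt_one_of_forall_component
      (fun v hv => gClass_subset_gClosure_diff hv)
      (fun μ hμ => hpos μ (hμ.mono Set.sdiff_subset)) hcomp⟩
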